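/- arXiv:1410.0428 — 2 statements merged into one kernel-verified Lean document; each statement's English description precedes it below -/
import Mathlib

section
/- Let X and Y be compact metric spaces and N a natural number. Then the Hausdorff distance between their order-N distance matrix sets satisfies d_H(K_N(X), K_N(Y)) ≤ 2 · d_GH(X, Y), where d_H is taken with respect to the ℓ∞ metric on symmetric N×N matrices. -/
/-- The set of distance matrices of order `N` of a metric space `X`:
all matrices `(d_X(x_i, x_j))_{i,j}` for `N`-tuples of points of `X`,
viewed inside `Fin N → Fin N → ℝ` with the sup (`ℓ∞`) metric. -/
def distMatrixSet (X : Type*) [MetricSpace X] (N : ℕ) : Set (Fin N → Fin N → ℝ) :=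
  { M | ∃ x : Fin N → X, M = fun i j => dist (x i) (x j) }

/-!
The map sending an `N`-tuple of points to its distance matrix is `2`-Lipschitz for the sup metrics,
and isometries do not change distance matrices. Embedding `X` and `Y` isometrically in a common
space, `K_N(X)` and `K_N(Y)` thus become the images under this `2`-Lipschitz map of the powers of
the two embedded copies. Passing to powers does not increase the Hausdorff distance, and an optimal
embedding realises `d_GH(X, Y)`.
-/

open Metric Set
open scoped ENNReal NNReal

section PseudoEMetricSpace

theorem infEDist_image_le_of_lipschitzWith {α β : Type*} [PseudoEMetricSpace α]
    [PseudoEMetricSpace β] {K : ℝ≥0} {f : α → β} (hf : LipschitzWith K f) (hK : K ≠ 0)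
    (x : α) (t : Set α) : infEDist (f x) (f '' t) ≤ K * infEDist x t := by
  simp_rw [infEDist, iInf_image,
    ENNReal.mul_iInf_of_ne (ENNReal.coe_ne_zero.2 hK) ENNReal.coe_ne_top]
  exact iInf₂_mono fun y _ => hf x y

theorem hausdorffEDist_image_le_of_lipschitzWith {α β : Type*} [PseudoEMetricSpace α]
    [PseudoEMetricSpace β] {K : ℝ≥0} {f : α → β} (hf : LipschitzWith K f) (hK : K ≠ 0)
    (s t : Set α) : hausdorffEDist (f '' s) (f '' t) ≤ K * hausdorffEDist s t := by
  refine hausdorffEDist_le_of_infEDist (forall_mem_image.2 fun x hx => ?_)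
    (forall_mem_image.2 fun y hy => ?_)
  · grw [infEDist_image_le_of_lipschitzWith hf hK, infEDist_le_hausdorffEDist_of_mem hx]
  · grw [infEDist_image_le_of_lipschitzWith hf hK, infEDist_le_hausdorffEDist_of_mem hy,
      hausdorffEDist_comm]

variable {ι : Type*} [Fintype ι] {α : ι → Type*} [∀ i, PseudoEMetricSpace (α i)]

theorem infEDist_univ_pi_le (x : ∀ i, α i) (t : ∀ i, Set (α i)) :
    infEDist x (univ.pi t) ≤ ⨆ i, infEDist (x i) (t i) := by
  refine le_of_forall_gt_imp_ge_of_dense fun r hr => ?_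
  have exists_near (i : ι) : ∃ y ∈ t i, edist (x i) y < r :=
    infEDist_lt_iff.1 ((le_iSup (fun i => infEDist (x i) (t i)) i).trans_lt hr)
  choose y hyt hxy using exists_near
  calc infEDist x (univ.pi t) ≤ edist x y := infEDist_le_edist_of_mem fun i _ => hyt i
    _ ≤ r := edist_pi_le_iff.2 fun i => (hxy i).le

theorem hausdorffEDist_univ_pi_le (s t : ∀ i, Set (α i)) :
    hausdorffEDist (univ.pi s) (univ.pi t) ≤ ⨆ i, hausdorffEDist (s i) (t i) := by
  refine hausdorffEDist_le_of_infEDist (fun x hx => ?_) (fun y hy => ?_)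
  · exact (infEDist_univ_pi_le x t).trans <|
      iSup_mono fun i => infEDist_le_hausdorffEDist_of_mem (hx i trivial)
  · refine (infEDist_univ_pi_le y s).trans <| iSup_mono fun i => ?_
    rw [hausdorffEDist_comm]
    exact infEDist_le_hausdorffEDist_of_mem (hy i trivial)

end PseudoEMetricSpace

section DistMatrix

/-- The distance matrix of a family of points. It is a curried function rather than a `Matrix`, so
that over a finite index type it carries the sup metric, as in `distMatrixSet`. -/
def distMatrix {ι Z : Type*} [PseudoMetricSpace Z] (z : ι → Z) : ι → ι → ℝ :=
  fun i j => dist (z i) (z j)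

theorem lipschitzWith_distMatrix {ι Z : Type*} [Fintype ι] [PseudoMetricSpace Z] :
    LipschitzWith 2 (distMatrix : (ι → Z) → ι → ι → ℝ) := by
  intro z w
  refine edist_pi_le_iff.2 fun i => edist_pi_le_iff.2 fun j => ?_
  calc edist (dist (z i) (z j)) (dist (w i) (w j))
      ≤ 2 * edist (z i, z j) (w i, w j) := LipschitzWith.dist (z i, z j) (w i, w j)
    _ ≤ 2 * edist z w := by
      gcongr
      exact max_le (edist_le_pi_edist z w i) (edist_le_pi_edist z w j)

theorem distMatrix_comp_of_isometry {ι X Z : Type*} [PseudoMetricSpace X] [PseudoMetricSpace Z]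
    {Φ : X → Z} (hΦ : Isometry Φ) (x : ι → X) : distMatrix (Φ ∘ x) = distMatrix x :=
  funext₂ fun i j => hΦ.dist_eq (x i) (x j)

theorem distMatrixSet_eq_image_of_isometry {X Z : Type*} [MetricSpace X] [PseudoMetricSpace Z]
    {Φ : X → Z} (hΦ : Isometry Φ) (N : ℕ) :
    distMatrixSet X N = distMatrix '' univ.pi fun _ : Fin N => range Φ := by
  rw [← range_piMap, ← range_comp]
  ext M
  refine exists_congr fun x => ?_
  change M = distMatrix x ↔ distMatrix (Φ ∘ x) = M
  rw [distMatrix_comp_of_isometry hΦ, eq_comm]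

theorem hausdorffEDist_distMatrixSet_le_of_isometry {X Y Z : Type*} [MetricSpace X]
    [MetricSpace Y] [PseudoMetricSpace Z] {Φ : X → Z} {Ψ : Y → Z} (hΦ : Isometry Φ)
    (hΨ : Isometry Ψ) (N : ℕ) :
    hausdorffEDist (distMatrixSet X N) (distMatrixSet Y N) ≤
      2 * hausdorffEDist (range Φ) (range Ψ) := by
  rw [distMatrixSet_eq_image_of_isometry hΦ, distMatrixSet_eq_image_of_isometry hΨ]
  calc hausdorffEDist (distMatrix '' univ.pi fun _ : Fin N => range Φ)
        (distMatrix '' univ.pi fun _ => range Ψ)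
      ≤ 2 * hausdorffEDist (univ.pi fun _ : Fin N => range Φ) (univ.pi fun _ => range Ψ) :=
        hausdorffEDist_image_le_of_lipschitzWith lipschitzWith_distMatrix two_ne_zero _ _
    _ ≤ 2 * hausdorffEDist (range Φ) (range Ψ) := by
      gcongr
      exact (hausdorffEDist_univ_pi_le _ _).trans (iSup_le fun _ => le_rfl)

end DistMatrix

/-- for compact metric spaces `X`, `Y` and any `N`,
`d_H(K_N(X), K_N(Y)) ≤ 2 d_GH(X, Y)`, where the Hausdorff distance is taken with
respect to the `ℓ∞` metric on symmetric `N × N` matrices. -/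
theorem hausdorffDist_distMatrixSet_le_two_ghDist (X Y : Type*)
    [MetricSpace X] [CompactSpace X] [Nonempty X]
    [MetricSpace Y] [CompactSpace Y] [Nonempty Y] (N : ℕ) :
    Metric.hausdorffDist (distMatrixSet X N) (distMatrixSet Y N) ≤
      2 * GromovHausdorff.ghDist X Y := by
  obtain ⟨Φ, Ψ, hΦ, hΨ, hGH⟩ := GromovHausdorff.ghDist_eq_hausdorffDist X Y
  have hfin : hausdorffEDist (range Φ) (range Ψ) ≠ ∞ :=
    hausdorffEDist_ne_top_of_nonempty_of_bounded (range_nonempty Φ) (range_nonempty Ψ)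
      (isCompact_range hΦ.continuous).isBounded (isCompact_range hΨ.continuous).isBounded
  calc hausdorffDist (distMatrixSet X N) (distMatrixSet Y N)
      ≤ (2 * hausdorffEDist (range Φ) (range Ψ)).toReal :=
        ENNReal.toReal_mono (ENNReal.mul_ne_top ENNReal.ofNat_ne_top hfin)
          (hausdorffEDist_distMatrixSet_le_of_isometry hΦ hΨ N)
    _ = 2 * GromovHausdorff.ghDist X Y := by
      rw [hGH, hausdorffDist, ENNReal.toReal_mul, ENNReal.toReal_ofNat]
end

section
/- Let X be a complete separable metric space. For any two Borel probability measures μ and ν on X, (1/2)·□((X,μ),(X,ν)) ≤ □((2⁻¹X, μ),(2⁻¹X, ν)) ≤ d_P(μ, ν), where 2⁻¹X denotes X with its metric halved. -/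
open MeasureTheory
open scoped ENNReal

/-- The parameter interval `I = [0, 1)`. -/
abbrev unitI : Set ℝ := Set.Ico (0 : ℝ) 1

/-- The Lebesgue measure on the subtype `I = [0, 1)`. -/
noncomputable def lebI : Measure unitI := Measure.comap Subtype.val volume

/-- A parameter of an mm-space `(X, μ)`: a Borel map `φ : I → X` pushing the
Lebesgue measure of `I = [0,1)` forward to `μ`. -/
def IsParameter {X : Type*} [MeasurableSpace X] (φ : unitI → X) (μ : Measure X) : Prop :=
  Measurable φ ∧ Measure.map φ lebI = μ

/-- The box distance `□(ρ₁, ρ₂)` between two pseudo-metrics on `I`: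
the infimum of `ε ≥ 0` admitting a Borel `I₀ ⊆ I` with `L¹(I₀) ≥ 1 − ε` and
`|ρ₁(s,t) − ρ₂(s,t)| ≤ ε` on `I₀ × I₀`. -/
noncomputable def boxDistP (ρ₁ ρ₂ : unitI → unitI → ℝ) : ℝ :=
  sInf {ε : ℝ | 0 ≤ ε ∧ ∃ I₀ : Set unitI, MeasurableSet I₀ ∧
    ENNReal.ofReal (1 - ε) ≤ lebI I₀ ∧
    ∀ s ∈ I₀, ∀ t ∈ I₀, |ρ₁ s t - ρ₂ s t| ≤ ε}

/-- The box distance between two mm-spaces (metrics given explicitly):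
the infimum of `□(φ*d_X, ψ*d_Y)` over all parameters `φ`, `ψ`. -/
noncomputable def boxDist {X Y : Type*} [MeasurableSpace X] [MeasurableSpace Y]
    (mX : MetricSpace X) (mY : MetricSpace Y) (μ : Measure X) (ν : Measure Y) : ℝ :=
  letI := mX
  letI := mY
  sInf { r : ℝ | ∃ φ : unitI → X, ∃ ψ : unitI → Y,
    IsParameter φ μ ∧ IsParameter ψ ν ∧
    r = boxDistP (fun s t => dist (φ s) (φ t)) (fun s t => dist (ψ s) (ψ t)) }

/-- The Prohorov distance between Borel probability measures on `X`. -/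
noncomputable def prohorovDist {X : Type*} [PseudoMetricSpace X] [MeasurableSpace X]
    (μ ν : Measure X) : ℝ :=
  sInf {ε : ℝ | 0 < ε ∧ ∀ A : Set X, MeasurableSet A →
    ν A ≤ μ (Metric.thickening ε A) + ENNReal.ofReal ε}

/-- The metric space `tX`: same carrier, metric multiplied by `t > 0`. -/
noncomputable def scaleMetric {X : Type*} (m : MetricSpace X) (t : ℝ) (ht : 0 < t) :
    MetricSpace X :=
  letI := m
  { dist := fun x y => t * dist x y
    dist_self := fun x => by simp
    dist_comm := fun x y => by simp [dist_comm]
    dist_triangle := fun x y z => by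
      have h := dist_triangle x y z
      calc t * dist x z ≤ t * (dist x y + dist y z) :=
            mul_le_mul_of_nonneg_left h ht.le
        _ = t * dist x y + t * dist y z := mul_add t _ _
    eq_of_dist_eq_zero := by
      intro x y hxy
      rcases mul_eq_zero.mp hxy with h' | h'
      · exact absurd h' (ne_of_gt ht)
      · exact eq_of_dist_eq_zero h' }

/-!
Multiplying both metrics by `c ≤ 1` multiplies the admissible distortions by `c` but leaves the mass
of the discarded set alone, whence `c * □(X, Y) ≤ □(cX, cY)`.

For the upper bound, Strassen's theorem turns `d_P(μ, ν) < ε` into a coupling `π` of `μ` and `ν`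
under which points are moved by more than `ε` only with probability at most `ε`. A parameter of `π`
has parameters of `μ` and `ν` as its coordinates; on the set where these are `ε`-close, the pulled
back metrics differ by at most `2 * ε`, and halving the metric makes this `ε`.

Only couplings up to an arbitrarily small error are needed. They come from a finite transport
problem between the cells of a fine partition, for which Hall's condition suffices: the transport
plan minimising the sum of the squared excesses at the targets has no excess.
-/

section FiniteTransport

theorem posPart_add_sq_le (y δ : ℝ) : ((y + δ)⁺) ^ 2 ≤ (y⁺ + δ) ^ 2 := by
  refine sq_le_sq.2 ?_
  rw [abs_of_nonneg (posPart_nonneg _)]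
  exact sup_le ((add_le_add_left (le_posPart y) δ).trans (le_abs_self _)) (abs_nonneg _)

variable {ι κ : Type*} [Fintype κ]

/-- The transport plans with supply `a` along the relation `R`: `w i k` is the amount shipped from
the source `i` to the target `k`, and every source ships all of its supply. No capacity is imposed
on the targets. -/
def transportPlans (R : ι → κ → Prop) (a : ι → ℝ) : Set (ι → κ → ℝ) :=
  {w | (∀ i k, 0 ≤ w i k) ∧ (∀ i k, ¬ R i k → w i k = 0) ∧ ∀ i, ∑ k, w i k = a i}

/-- The amount by which the plan `w` overfills the target `k` of capacity `b k`. -/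
def excess [Fintype ι] (b : κ → ℝ) (w : ι → κ → ℝ) (k : κ) : ℝ :=
  (∑ i, w i k - b k)⁺

open Classical in
/-- The plan obtained from `w` when the source `i` redirects the amount `δ` from the target `k`
to the target `l`. -/
noncomputable def reroute (w : ι → κ → ℝ) (i : ι) (k l : κ) (δ : ℝ) : ι → κ → ℝ :=
  w + Pi.single i (Pi.single l δ - Pi.single k δ)

variable {R : ι → κ → Prop} {a : ι → ℝ} {b : κ → ℝ} {w : ι → κ → ℝ}

theorem isCompact_transportPlans (R : ι → κ → Prop) (a : ι → ℝ) :
    IsCompact (transportPlans R a) := by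
  have hbounded : transportPlans R a ⊆ Set.Icc 0 (fun i _ => a i) := fun w hw =>
    ⟨hw.1, fun i k => (Finset.single_le_sum (fun k _ => hw.1 i k) (Finset.mem_univ k)).trans_eq
      (hw.2.2 i)⟩
  refine isCompact_Icc.of_isClosed_subset ?_ hbounded
  simp only [transportPlans, Set.ofPred_and, Set.ofPred_forall]
  refine .inter ?_ (.inter ?_ ?_)
  · exact isClosed_iInter fun i => isClosed_iInter fun k =>
      isClosed_le continuous_const (by fun_prop)
  · exact isClosed_iInter fun i => isClosed_iInter fun k => isClosed_iInter fun _ =>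
      isClosed_eq (by fun_prop) continuous_const
  · exact isClosed_iInter fun i => isClosed_eq (by fun_prop) continuous_const

theorem transportPlans_nonempty (ha : ∀ i, 0 ≤ a i) (hR : ∀ i, a i ≠ 0 → ∃ k, R i k) :
    (transportPlans R a).Nonempty := by
  classical
  have hrow (i : ι) : ∃ v : κ → ℝ, 0 ≤ v ∧ (∀ k, ¬ R i k → v k = 0) ∧
      ∑ k, v k = a i := by
    rcases eq_or_ne (a i) 0 with h0 | h0
    · exact ⟨0, le_rfl, fun _ _ => rfl, by simp [h0]⟩
    · obtain ⟨k, hk⟩ := hR i h0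
      refine ⟨Pi.single k (a i), (Pi.single_nonneg (i := k)).2 (ha i), fun l hl => ?_, by simp⟩
      exact Pi.single_eq_of_ne (by rintro rfl; exact hl hk) _
  choose w hw using hrow
  exact ⟨w, fun i => (hw i).1, fun i => (hw i).2.1, fun i => (hw i).2.2⟩

theorem reroute_mem_transportPlans (hw : w ∈ transportPlans R a) {i : ι} {k l : κ} {δ : ℝ}
    (hl : R i l) (hδ : 0 ≤ δ) (hδw : δ ≤ w i k) : reroute w i k l δ ∈ transportPlans R a := by
  classical
  obtain ⟨hnonneg, hsupp, hrow⟩ := hw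
  have hof_ne {i' : ι} (h : i' ≠ i) : reroute w i k l δ i' = w i' := by simp [reroute, h]
  have hself (k' : κ) : reroute w i k l δ i k' =
      w i k' + ((if k' = l then δ else 0) - if k' = k then δ else 0) := by
    simp [reroute, Pi.single_apply]
  refine ⟨fun i' k' => ?_, fun i' k' hk' => ?_, fun i' => ?_⟩ <;>
    rcases eq_or_ne i' i with rfl | hi
  · have := hnonneg i' k'
    rw [hself]
    split_ifs <;> subst_vars <;> linarith
  · rw [hof_ne hi]
    exact hnonneg i' k'
  · have hzero := hsupp i' k' hk'
    have hkl : k' ≠ l := by rintro rfl; exact hk' hl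
    rw [hself, if_neg hkl, hzero]
    split_ifs <;> subst_vars <;> linarith
  · rw [hof_ne hi]
    exact hsupp i' k' hk'
  · simp [hself, Finset.sum_add_distrib, Finset.sum_sub_distrib, hrow]
  · rw [hof_ne hi]
    exact hrow i'

variable [Fintype ι]

theorem sum_excess_reroute_sq_le (b : κ → ℝ) (w : ι → κ → ℝ) (i : ι) {k l : κ} (hkl : k ≠ l)
    (δ : ℝ) :
    ∑ k', excess b (reroute w i k l δ) k' ^ 2 ≤
      ∑ k', excess b w k' ^ 2 + 2 * δ * (excess b w l - excess b w k + δ) := by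
  classical
  let v : κ → ℝ := Pi.single l δ - Pi.single k δ
  have hterm (k' : κ) : excess b (reroute w i k l δ) k' ^ 2 ≤ (excess b w k' + v k') ^ 2 := by
    have hcol : ∑ i', reroute w i k l δ i' k' - b k' = (∑ i', w i' k' - b k') + v k' := by
      have hsingle : ∑ i', (Pi.single i v : ι → κ → ℝ) i' k' = v k' := by
        rw [← Finset.sum_apply, Finset.sum_pi_single', if_pos (Finset.mem_univ i)]
      simp only [reroute, Pi.add_apply, Finset.sum_add_distrib]
      rw [hsingle]
      ring
    simp only [excess, hcol]
    exact posPart_add_sq_le _ _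
  have hv : ∑ k', (2 * (excess b w k' * v k') + v k' ^ 2) =
      2 * δ * (excess b w l - excess b w k + δ) := by
    rw [Finset.sum_eq_add_of_mem k l (Finset.mem_univ _) (Finset.mem_univ _) hkl]
    · simp only [v, Pi.sub_apply, Pi.single_eq_same, Pi.single_eq_of_ne hkl,
        Pi.single_eq_of_ne hkl.symm]
      ring
    · rintro k' - ⟨hk, hl⟩
      simp [v, hk, hl]
  calc ∑ k', excess b (reroute w i k l δ) k' ^ 2
      ≤ ∑ k', (excess b w k' + v k') ^ 2 := Finset.sum_le_sum fun k' _ => hterm k'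
    _ = ∑ k', excess b w k' ^ 2 + ∑ k', (2 * (excess b w k' * v k') + v k' ^ 2) := by
        rw [← Finset.sum_add_distrib]
        exact Finset.sum_congr rfl fun k' _ => by ring
    _ = _ := by rw [hv]

theorem excess_le_excess_of_isMinOn (hw : w ∈ transportPlans R a)
    (hmin : IsMinOn (fun w => ∑ k, excess b w k ^ 2) (transportPlans R a) w)
    {i : ι} {k l : κ} (hk : w i k ≠ 0) (hl : R i l) : excess b w k ≤ excess b w l := by
  by_contra! hlt
  have hkpos : 0 < w i k := (hw.1 i k).lt_of_ne' hk
  set δ := min (w i k) ((excess b w k - excess b w l) / 2) with hδ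
  have hδpos : 0 < δ := lt_min hkpos (by linarith)
  have hδhalf : δ ≤ (excess b w k - excess b w l) / 2 := min_le_right _ _
  have hmem : reroute w i k l δ ∈ transportPlans R a :=
    reroute_mem_transportPlans hw hl hδpos.le (min_le_left _ _)
  have hkl : k ≠ l := by rintro rfl; exact lt_irrefl _ hlt
  have hcost := (isMinOn_iff.1 hmin _ hmem).trans (sum_excess_reroute_sq_le b w i hkl δ)
  have hneg : δ * (excess b w l - excess b w k + δ) < 0 :=
    mul_neg_of_pos_of_neg hδpos (by linarith)
  linarith

open Classical in
/-- Minimise the sum of the squared excesses. At a minimum, the sources feeding the most overfilled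
targets can only reach such targets, which contradicts Hall's condition unless no excess is left. -/
theorem exists_transportPlan_of_hall (ha : ∀ i, 0 ≤ a i) (hb : ∀ k, 0 ≤ b k)
    (hall : ∀ J : Finset ι, ∑ i ∈ J, a i ≤ ∑ k with ∃ i ∈ J, R i k, b k) :
    ∃ w ∈ transportPlans R a, ∀ k, ∑ i, w i k ≤ b k := by
  have hR (i : ι) (hi : a i ≠ 0) : ∃ k, R i k := by
    by_contra! hnone
    have := hall {i}
    simp only [Finset.sum_singleton, Finset.mem_singleton, exists_eq_left, hnone,
      Finset.filter_false, Finset.sum_empty] at this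
    exact hi (le_antisymm this (ha i))
  obtain ⟨w, hw, hmin⟩ := (isCompact_transportPlans R a).exists_isMinOn
    (transportPlans_nonempty ha hR)
    (f := fun w => ∑ k, excess b w k ^ 2) (by unfold excess; fun_prop)
  refine ⟨w, hw, fun k₀ => ?_⟩
  by_contra! hk₀
  have : Nonempty κ := ⟨k₀⟩
  obtain ⟨k₁, hk₁⟩ := Finite.exists_max (excess b w)
  have hpos : 0 < excess b w k₁ := (posPart_pos (sub_pos.2 hk₀)).trans_le (hk₁ k₀)
  let S : Finset κ := {k | excess b w k = excess b w k₁}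
  let J : Finset ι := {i | ∃ k ∈ S, w i k ≠ 0}
  have hreach : ({k | ∃ i ∈ J, R i k} : Finset κ) ⊆ S := by
    intro l hl
    obtain ⟨i, hi, hil⟩ := (Finset.mem_filter.1 hl).2
    obtain ⟨k, hk, hik⟩ := (Finset.mem_filter.1 hi).2
    refine Finset.mem_filter.2 ⟨Finset.mem_univ _, le_antisymm (hk₁ l) ?_⟩
    rw [← (Finset.mem_filter.1 hk).2]
    exact excess_le_excess_of_isMinOn hw hmin hik hil
  have hover (k : κ) (hk : k ∈ S) : b k < ∑ i ∈ J, w i k := by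
    have hcol : ∑ i ∈ J, w i k = ∑ i, w i k :=
      Finset.sum_subset (Finset.subset_univ J) fun i _ hi => by
        by_contra hik
        exact hi (Finset.mem_filter.2 ⟨Finset.mem_univ _, k, hk, hik⟩)
    rw [hcol, ← sub_pos, ← posPart_pos_iff]
    exact hpos.trans_eq (Finset.mem_filter.1 hk).2.symm
  have hlt : ∑ k with ∃ i ∈ J, R i k, b k < ∑ i ∈ J, a i :=
    calc ∑ k with ∃ i ∈ J, R i k, b k ≤ ∑ k ∈ S, b k :=
          Finset.sum_le_sum_of_subset_of_nonneg hreach fun k _ _ => hb k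
      _ < ∑ k ∈ S, ∑ i ∈ J, w i k := Finset.sum_lt_sum_of_nonempty ⟨k₁, by simp [S]⟩ hover
      _ = ∑ i ∈ J, ∑ k ∈ S, w i k := Finset.sum_comm
      _ ≤ ∑ i ∈ J, ∑ k, w i k := Finset.sum_le_sum fun i _ =>
          Finset.sum_le_sum_of_subset_of_nonneg (Finset.subset_univ S) fun k _ _ => hw.1 i k
      _ = ∑ i ∈ J, a i := Finset.sum_congr rfl fun i _ => hw.2.2 i
  exact absurd (hall J) hlt.not_ge

open Classical in
theorem exists_transport_of_hall_deficit {M : ℝ} (ha : ∀ i, 0 ≤ a i) (hb : ∀ k, 0 ≤ b k)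
    (hall : ∀ J : Finset ι, ∑ i ∈ J, a i ≤ (∑ k with ∃ i ∈ J, R i k, b k) + M) :
    ∃ w : ι → κ → ℝ, (∀ i k, 0 ≤ w i k) ∧ (∀ i k, w i k ≠ 0 → R i k) ∧
      (∀ i, ∑ k, w i k ≤ a i) ∧ (∀ k, ∑ i, w i k ≤ b k) ∧
      ∑ i, a i ≤ ∑ i, ∑ k, w i k + M := by
  have hM : 0 ≤ M := by simpa using hall ∅
  -- An additional target of capacity `M`, within reach of every source, absorbs the deficit.
  let R' : ι → Option κ → Prop := fun i o => o.elim True (R i)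
  let b' : Option κ → ℝ := fun o => o.elim M b
  have hall' (J : Finset ι) : ∑ i ∈ J, a i ≤ ∑ o with ∃ i ∈ J, R' i o, b' o := by
    rcases J.eq_empty_or_nonempty with rfl | hJ
    · simp
    · refine (hall J).trans_eq ?_
      simp only [Finset.sum_filter, Fintype.sum_option, R', b', Option.elim_none,
        Option.elim_some, and_true, if_pos hJ.exists_mem, add_comm]
      congr!
  obtain ⟨w, ⟨hnonneg, hsupp, hrow⟩, hcol⟩ := exists_transportPlan_of_hall ha
    (Option.rec hM hb) hall'
  have hsplit (i : ι) : a i = w i none + ∑ k, w i (some k) := by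
    rw [← hrow i, Fintype.sum_option]
  refine ⟨fun i k => w i (some k), fun i k => hnonneg i _, fun i k => ?_, fun i => ?_,
    fun k => hcol (some k), ?_⟩
  · exact not_imp_comm.1 (hsupp i (some k))
  · rw [hsplit i]
    exact le_add_of_nonneg_left (hnonneg i none)
  · simp only [hsplit, Finset.sum_add_distrib]
    have hextra : ∑ i, w i none ≤ M := hcol none
    linarith

end FiniteTransport

section Coupling

variable {X Y : Type*} [MeasurableSpace X] [MeasurableSpace Y]

/-- `π` is a coupling (transport plan with no deficiency) of `μ` and `ν`: a measure on the product
with these marginals. -/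
structure IsCoupling (π : Measure (X × Y)) (μ : Measure X) (ν : Measure Y) : Prop where
  fst_eq : π.fst = μ
  snd_eq : π.snd = ν

variable {π π' : Measure (X × Y)} {μ μ' : Measure X} {ν ν' : Measure Y}

namespace IsCoupling

theorem measure_univ_fst (h : IsCoupling π μ ν) : π Set.univ = μ Set.univ := by
  rw [← h.fst_eq, Measure.fst_univ]

theorem isProbabilityMeasure [IsProbabilityMeasure μ] (h : IsCoupling π μ ν) :
    IsProbabilityMeasure π :=
  ⟨by rw [h.measure_univ_fst, measure_univ]⟩

theorem add (h : IsCoupling π μ ν) (h' : IsCoupling π' μ' ν') :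
    IsCoupling (π + π') (μ + μ') (ν + ν') :=
  ⟨by rw [Measure.fst_add, h.fst_eq, h'.fst_eq], by rw [Measure.snd_add, h.snd_eq, h'.snd_eq]⟩

theorem smul_prod [IsFiniteMeasure μ] [IsFiniteMeasure ν] (h : μ Set.univ = ν Set.univ) :
    IsCoupling ((μ Set.univ)⁻¹ • μ.prod ν) μ ν := by
  rcases eq_or_ne (μ Set.univ) 0 with h0 | h0
  · obtain rfl := Measure.measure_univ_eq_zero.1 h0
    obtain rfl := Measure.measure_univ_eq_zero.1 (h ▸ h0)
    exact ⟨by simp, by simp⟩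
  · have hinv : (μ Set.univ)⁻¹ * μ Set.univ = 1 := ENNReal.inv_mul_cancel h0 (measure_ne_top _ _)
    constructor
    · rw [Measure.fst, Measure.map_smul, Measure.map_fst_prod, smul_smul, ← h, hinv, one_smul]
    · rw [Measure.snd, Measure.map_smul, Measure.map_snd_prod, smul_smul, hinv, one_smul]

end IsCoupling

theorem exists_isCoupling_ge [IsFiniteMeasure μ] [IsFiniteMeasure ν] (h : μ Set.univ = ν Set.univ)
    (hμ : π.fst ≤ μ) (hν : π.snd ≤ ν) : ∃ π', IsCoupling π' μ ν ∧ π ≤ π' := by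
  have := isFiniteMeasure_of_le μ hμ
  have := isFiniteMeasure_of_le ν hν
  have hmass : (μ - π.fst) Set.univ = (ν - π.snd) Set.univ := by
    rw [Measure.sub_apply .univ hμ, Measure.sub_apply .univ hν, h, Measure.fst_univ,
      Measure.snd_univ]
  have hadd := (IsCoupling.mk (π := π) rfl rfl).add (IsCoupling.smul_prod hmass)
  rw [add_comm π.fst, add_comm π.snd, Measure.sub_add_cancel_of_le hμ,
    Measure.sub_add_cancel_of_le hν] at hadd
  exact ⟨_, hadd, Measure.le_add_right le_rfl⟩

open ProbabilityTheory

theorem smul_cond_le_restrict {c : ℝ≥0∞} {s : Set X} (h : c ≤ μ s) :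
    c • μ[|s] ≤ μ.restrict s := by
  rw [ProbabilityTheory.cond, smul_smul]
  refine Measure.le_iff'.2 fun t => ?_
  rw [Measure.smul_apply, smul_eq_mul, ← div_eq_mul_inv]
  exact mul_le_of_le_one_left zero_le (ENNReal.div_le_of_le_mul (by simpa using h))

theorem sum_restrict_le {ι : Type*} [Fintype ι] {s : ι → Set X} (hs : ∀ i, MeasurableSet (s i))
    (hd : Pairwise fun i j => Disjoint (s i) (s j)) : ∑ i, μ.restrict (s i) ≤ μ := by
  rw [← Measure.sum_fintype, ← Measure.restrict_iUnion hd hs]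
  exact Measure.restrict_le_self

variable {ι κ : Type*} [Fintype ι] [Fintype κ]

/-- The measure on `X × Y` that spreads the mass `w i k` over the block `s i ×ˢ t k`, according to
the product of the conditional measures of `μ` on `s i` and of `ν` on `t k`. A block of measure zero
carries no mass, whatever its weight. -/
noncomputable def blockMeasure (μ : Measure X) (ν : Measure Y) (s : ι → Set X) (t : κ → Set Y)
    (w : ι → κ → ℝ≥0∞) : Measure (X × Y) :=
  ∑ i, ∑ k, w i k • (μ[|s i]).prod (ν[|t k])

variable {s : ι → Set X} {t : κ → Set Y} {w : ι → κ → ℝ≥0∞}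

theorem blockMeasure_map_swap :
    (blockMeasure μ ν s t w).map Prod.swap = blockMeasure ν μ t s fun k i => w i k := by
  simp only [blockMeasure, Measure.map_finset_sum measurable_swap.aemeasurable,
    Measure.map_smul, Measure.prod_swap]
  exact Finset.sum_comm

theorem fst_blockMeasure_le
    (hs : ∀ i, MeasurableSet (s i)) (hd : Pairwise fun i j => Disjoint (s i) (s j))
    (hw : ∀ i, ∑ k, w i k ≤ μ (s i)) : (blockMeasure μ ν s t w).fst ≤ μ := by
  calc (blockMeasure μ ν s t w).fst
      = ∑ i, ∑ k, w i k • ν[|t k] Set.univ • μ[|s i] := by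
        simp only [blockMeasure, Measure.fst, Measure.map_finset_sum measurable_fst.aemeasurable,
          Measure.map_smul, Measure.map_fst_prod]
    _ ≤ ∑ i, ∑ k, w i k • μ[|s i] := by
        gcongr with i _ k _
        exact Measure.le_iff'.2 fun u => mul_le_of_le_one_left zero_le prob_le_one
    _ = ∑ i, (∑ k, w i k) • μ[|s i] := by simp only [Finset.sum_smul]
    _ ≤ ∑ i, μ.restrict (s i) :=
        Finset.sum_le_sum fun i _ => smul_cond_le_restrict (hw i)
    _ ≤ μ := sum_restrict_le hs hd

theorem snd_blockMeasure_le
    (ht : ∀ k, MeasurableSet (t k)) (hd : Pairwise fun k l => Disjoint (t k) (t l))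
    (hw : ∀ k, ∑ i, w i k ≤ ν (t k)) : (blockMeasure μ ν s t w).snd ≤ ν := by
  rw [← Measure.fst_map_swap, blockMeasure_map_swap]
  exact fst_blockMeasure_le ht hd hw

theorem sum_le_blockMeasure [IsFiniteMeasure μ] [IsFiniteMeasure ν]
    (hμ : ∀ i, ∑ k, w i k ≤ μ (s i)) (hν : ∀ k, ∑ i, w i k ≤ ν (t k)) {D : Set (X × Y)}
    (hD : ∀ i k, w i k ≠ 0 → s i ×ˢ t k ⊆ D) :
    ∑ i, ∑ k, w i k ≤ blockMeasure μ ν s t w D := by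
  simp only [blockMeasure, Measure.finsetSum_apply, Measure.smul_apply, smul_eq_mul]
  gcongr with i _ k _
  rcases eq_or_ne (w i k) 0 with h0 | h0
  · simp [h0]
  have hsi : μ (s i) ≠ 0 := ne_bot_of_le_ne_bot h0
    ((Finset.single_le_sum (fun _ _ => zero_le) (Finset.mem_univ k)).trans (hμ i))
  have htk : ν (t k) ≠ 0 := ne_bot_of_le_ne_bot h0
    ((Finset.single_le_sum (f := fun i => w i k) (fun _ _ => zero_le) (Finset.mem_univ i)).trans
      (hν k))
  calc w i k = w i k * (μ[|s i]).prod (ν[|t k]) (s i ×ˢ t k) := by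
        rw [Measure.prod_prod, cond_apply_self hsi (measure_ne_top _ _),
          cond_apply_self htk (measure_ne_top _ _), one_mul, mul_one]
    _ ≤ w i k * (μ[|s i]).prod (ν[|t k]) D := by gcongr; exact hD i k h0

theorem exists_isCoupling_of_blocks [IsFiniteMeasure μ] [IsFiniteMeasure ν]
    (h : μ Set.univ = ν Set.univ)
    (hs : ∀ i, MeasurableSet (s i)) (hsd : Pairwise fun i j => Disjoint (s i) (s j))
    (ht : ∀ k, MeasurableSet (t k)) (htd : Pairwise fun k l => Disjoint (t k) (t l))
    {w : ι → κ → ℝ} (hw : ∀ i k, 0 ≤ w i k)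
    (hμ : ∀ i, ∑ k, w i k ≤ μ.real (s i)) (hν : ∀ k, ∑ i, w i k ≤ ν.real (t k))
    {D : Set (X × Y)} (hD : ∀ i k, w i k ≠ 0 → s i ×ˢ t k ⊆ D) :
    ∃ π, IsCoupling π μ ν ∧ ∑ i, ∑ k, w i k ≤ π.real D := by
  let W : ι → κ → ℝ≥0∞ := fun i k => ENNReal.ofReal (w i k)
  have hWμ (i : ι) : ∑ k, W i k ≤ μ (s i) := by
    rw [← ENNReal.ofReal_sum_of_nonneg fun k _ => hw i k, ← ofReal_measureReal]
    exact ENNReal.ofReal_le_ofReal (hμ i)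
  have hWν (k : κ) : ∑ i, W i k ≤ ν (t k) := by
    rw [← ENNReal.ofReal_sum_of_nonneg fun i _ => hw i k, ← ofReal_measureReal]
    exact ENNReal.ofReal_le_ofReal (hν k)
  obtain ⟨π, hπ, hle⟩ := exists_isCoupling_ge h (fst_blockMeasure_le (ν := ν) hs hsd hWμ)
    (snd_blockMeasure_le (μ := μ) ht htd hWν)
  have : IsFiniteMeasure π := ⟨by rw [hπ.measure_univ_fst]; exact measure_lt_top _ _⟩
  refine ⟨π, hπ, (ENNReal.ofReal_le_iff_le_toReal (measure_ne_top _ _)).1 ?_⟩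
  calc ENNReal.ofReal (∑ i, ∑ k, w i k) = ∑ i, ∑ k, W i k := by
        rw [ENNReal.ofReal_sum_of_nonneg fun i _ => Finset.sum_nonneg fun k _ => hw i k]
        exact Finset.sum_congr rfl fun i _ => ENNReal.ofReal_sum_of_nonneg fun k _ => hw i k
    _ ≤ blockMeasure μ ν s t W D := sum_le_blockMeasure hWμ hWν fun i k hik => hD i k fun h0 =>
        hik (by simp [W, h0])
    _ ≤ π D := hle D

end Coupling

section Strassen

open Classical in
theorem sum_measureReal_le_of_le_thickening {X : Type*} [PseudoMetricSpace X]
    [MeasurableSpace X] {μ ν : Measure X} [IsFiniteMeasure μ]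
    [IsFiniteMeasure ν] {ε δ : ℝ}
    (h : ∀ A, MeasurableSet A → ν.real A ≤ μ.real (Metric.thickening ε A) + δ)
    {ι : Type*} [Fintype ι] {B : ι → Set X} (hB : ∀ i, MeasurableSet (B i))
    (hd : Pairwise fun i j => Disjoint (B i) (B j)) (J : Finset ι) :
    ∑ j ∈ J, ν.real (B j) ≤
      (∑ i with ∃ j ∈ J, ∃ y ∈ B j, ∃ x ∈ B i, dist x y < ε, μ.real (B i)) +
        (δ + μ.real (⋃ i, B i)ᶜ) := by
  set T : Finset ι := {i | ∃ j ∈ J, ∃ y ∈ B j, ∃ x ∈ B i, dist x y < ε}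
  have hreal (κ : Measure X) [IsFiniteMeasure κ] (K : Finset ι) :
      κ.real (⋃ i ∈ K, B i) = ∑ i ∈ K, κ.real (B i) :=
    measureReal_biUnion_finset (fun i _ j _ hij => hd hij) fun i _ => hB i
  have hsub : Metric.thickening ε (⋃ j ∈ J, B j) ⊆ (⋃ i ∈ T, B i) ∪ (⋃ i, B i)ᶜ := by
    intro x hx
    refine or_iff_not_imp_right.2 fun hxB => ?_
    obtain ⟨i, hi⟩ := Set.mem_iUnion.1 (not_not.1 hxB)
    obtain ⟨y, hy, hxy⟩ := Metric.mem_thickening_iff.1 hx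
    obtain ⟨j, hj, hyj⟩ := Set.mem_iUnion₂.1 hy
    exact Set.mem_iUnion₂.2
      ⟨i, Finset.mem_filter.2 ⟨Finset.mem_univ _, j, hj, y, hyj, x, hi, hxy⟩, hi⟩
  calc ∑ j ∈ J, ν.real (B j) = ν.real (⋃ j ∈ J, B j) := (hreal ν J).symm
    _ ≤ μ.real (Metric.thickening ε (⋃ j ∈ J, B j)) + δ :=
        h _ (J.measurableSet_biUnion fun j _ => hB j)
    _ ≤ (μ.real (⋃ i ∈ T, B i) + μ.real (⋃ i, B i)ᶜ) + δ := by
        gcongr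
        exact (measureReal_mono hsub).trans (measureReal_union_le _ _)
    _ = ∑ i ∈ T, μ.real (B i) + (δ + μ.real (⋃ i, B i)ᶜ) := by rw [hreal μ T]; ring

variable {X : Type*} [PseudoMetricSpace X] [TopologicalSpace.SeparableSpace X] [MeasurableSpace X]
  [OpensMeasurableSpace X]

theorem exists_disjoint_dist_le_measureReal_compl_le (κ : Measure X) [IsFiniteMeasure κ] {δ : ℝ}
    (hδ : 0 < δ) : ∃ (n : ℕ) (B : Fin n → Set X), (∀ i, MeasurableSet (B i)) ∧
      (Pairwise fun i j => Disjoint (B i) (B j)) ∧ (∀ i, ∀ x ∈ B i, ∀ y ∈ B i, dist x y ≤ δ) ∧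
      κ.real (⋃ i, B i)ᶜ ≤ δ := by
  obtain ⟨E, hmeas, hbdd, hdiam, hcover, hdisj⟩ :=
    SeparableSpace.exists_measurable_partition_diam_le X hδ
  have htail := tendsto_measure_biUnion_Ici_zero_of_pairwise_disjoint (μ := κ)
    (fun n => (hmeas n).nullMeasurableSet) hdisj
  obtain ⟨n, hn⟩ := (htail.eventually_le_const (ENNReal.ofReal_pos.2 hδ)).exists
  refine ⟨n, fun i => E i, fun i => hmeas i, fun i j hij => hdisj (Fin.val_ne_of_ne hij),
    fun i x hx y hy => (Metric.dist_le_diam_of_mem (hbdd i) hx hy).trans (hdiam i), ?_⟩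
  have hsub : (⋃ i : Fin n, E i)ᶜ ⊆ ⋃ i ≥ n, E i := by
    intro x hx
    obtain ⟨k, hk⟩ := Set.mem_iUnion.1 (hcover.ge (Set.mem_univ x))
    refine Set.mem_iUnion₂.2 ⟨k, le_of_not_gt fun hkn => ?_, hk⟩
    exact hx (Set.mem_iUnion.2 ⟨⟨k, hkn⟩, hk⟩)
  exact ENNReal.toReal_le_of_le_ofReal hδ.le ((measure_mono hsub).trans hn)

theorem measurableSet_dist_le (c : ℝ) : MeasurableSet {z : X × X | dist z.1 z.2 ≤ c} :=
  measurableSet_le (measurable_fst.dist measurable_snd) measurable_const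

/-- Strassen's theorem up to `η`: discretising both measures along cells of diameter at most `η / 2`
turns the hypothesis into Hall's condition for the cell masses. -/
theorem exists_isCoupling_of_le_thickening {μ ν : Measure X} [IsFiniteMeasure μ]
    [IsFiniteMeasure ν] (hmass : μ Set.univ = ν Set.univ) {ε δ η : ℝ}
    (h : ∀ A, MeasurableSet A → ν.real A ≤ μ.real (Metric.thickening ε A) + δ) (hη : 0 < η) :
    ∃ π, IsCoupling π μ ν ∧ π.real {z | dist z.1 z.2 ≤ ε + η}ᶜ ≤ δ + η := by
  classical
  obtain ⟨n, B, hB, hd, hdist, hcompl⟩ :=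
    exists_disjoint_dist_le_measureReal_compl_le (μ + ν) (half_pos hη)
  rw [measureReal_add_apply] at hcompl
  obtain ⟨w, hnonneg, hsupp, hrow, hcol, htotal⟩ := exists_transport_of_hall_deficit
    (fun _ => measureReal_nonneg) (fun _ => measureReal_nonneg)
    (sum_measureReal_le_of_le_thickening h hB hd)
  have hnear (i j : Fin n) (hw : w j i ≠ 0) : B i ×ˢ B j ⊆ {z | dist z.1 z.2 ≤ ε + η} := by
    rintro ⟨x', y'⟩ ⟨hx', hy'⟩
    obtain ⟨y, hy, x, hx, hxy⟩ := hsupp j i hw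
    calc dist x' y' ≤ dist x' x + dist x y + dist y y' := dist_triangle4 _ _ _ _
      _ ≤ η / 2 + ε + η / 2 := by
          gcongr
          exacts [hdist i _ hx' _ hx, hdist j _ hy _ hy']
      _ = ε + η := by ring
  obtain ⟨π, hπ, hle⟩ := exists_isCoupling_of_blocks hmass hB hd hB hd
    (fun i j => hnonneg j i) hcol hrow hnear
  have : IsFiniteMeasure π := ⟨by rw [hπ.measure_univ_fst]; exact measure_lt_top _ _⟩
  refine ⟨π, hπ, ?_⟩
  have hπuniv : π.real Set.univ = ν.real Set.univ := by
    rw [Measure.real, hπ.measure_univ_fst, hmass, Measure.real]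
  have hνuniv : ν.real Set.univ = ∑ j, ν.real (B j) + ν.real (⋃ j, B j)ᶜ := by
    rw [← measureReal_iUnion_fintype hd hB, measureReal_add_measureReal_compl (.iUnion hB)]
  rw [measureReal_compl (measurableSet_dist_le _), hπuniv, hνuniv]
  rw [Finset.sum_comm] at hle
  linarith

end Strassen

section Parameter

theorem map_inclusion_lebI :
    lebI.map (Set.inclusion Set.Ico_subset_Icc_self : unitI → unitInterval) = volume := by
  have hval : MeasurableEmbedding (Subtype.val : unitInterval → ℝ) :=
    .subtype_coe measurableSet_Icc
  rw [← hval.comap_map (lebI.map _), Measure.map_map measurable_subtype_coe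
    (measurable_inclusion _), Set.val_comp_inclusion, lebI, map_comap_subtype_coe measurableSet_Ico,
    restrict_Ico_eq_restrict_Icc, ← map_comap_subtype_coe measurableSet_Icc, hval.comap_map]
  rfl

variable {X Y : Type*} [MeasurableSpace X] [MeasurableSpace Y]

theorem exists_isParameter [StandardBorelSpace X] (μ : Measure X) [IsProbabilityMeasure μ] :
    ∃ φ, IsParameter φ μ := by
  have := nonempty_of_isProbabilityMeasure μ
  obtain ⟨f, hf, hfμ⟩ := μ.exists_measurable_map_eq
  refine ⟨_, hf.comp (measurable_inclusion Set.Ico_subset_Icc_self), ?_⟩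
  rw [← Measure.map_map hf (measurable_inclusion _), map_inclusion_lebI, hfμ]

theorem IsParameter.comp {φ : unitI → X} {μ : Measure X} (hφ : IsParameter φ μ) {f : X → Y}
    (hf : Measurable f) : IsParameter (f ∘ φ) (μ.map f) :=
  ⟨hf.comp hφ.1, by rw [← Measure.map_map hf hφ.1, hφ.2]⟩

end Parameter

section BoxDistance

theorem boxDistP_nonneg (ρ₁ ρ₂ : unitI → unitI → ℝ) : 0 ≤ boxDistP ρ₁ ρ₂ :=
  Real.sInf_nonneg fun _ h => h.1

theorem boxDistP_le {ρ₁ ρ₂ : unitI → unitI → ℝ} {ε : ℝ} (hε : 0 ≤ ε) {I₀ : Set unitI}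
    (hI₀ : MeasurableSet I₀) (hmass : ENNReal.ofReal (1 - ε) ≤ lebI I₀)
    (hρ : ∀ s ∈ I₀, ∀ t ∈ I₀, |ρ₁ s t - ρ₂ s t| ≤ ε) : boxDistP ρ₁ ρ₂ ≤ ε :=
  csInf_le ⟨0, fun _ h => h.1⟩ ⟨hε, I₀, hI₀, hmass, hρ⟩

theorem mul_boxDistP_le {c : ℝ} (hc : 0 < c) (hc1 : c ≤ 1) (ρ₁ ρ₂ : unitI → unitI → ℝ) :
    c * boxDistP ρ₁ ρ₂ ≤ boxDistP (fun s t => c * ρ₁ s t) (fun s t => c * ρ₂ s t) := by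
  refine le_csInf ⟨1, zero_le_one, ∅, .empty, by simp, by simp⟩ ?_
  rintro ε ⟨hε, I₀, hI₀, hmass, hρ⟩
  have hεc : ε ≤ ε / c := le_div_self hε hc hc1
  rw [← le_div_iff₀' hc]
  refine boxDistP_le (by positivity) hI₀
    ((ENNReal.ofReal_le_ofReal (by linarith)).trans hmass) fun s hs t ht => ?_
  rw [le_div_iff₀' hc]
  simpa only [← mul_sub, abs_mul, abs_of_pos hc] using hρ s hs t ht

variable {X Y : Type*} [MeasurableSpace X] [MeasurableSpace Y]

theorem boxDist_le_boxDistP (mX : MetricSpace X) (mY : MetricSpace Y) {μ : Measure X}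
    {ν : Measure Y} {φ : unitI → X} {ψ : unitI → Y} (hφ : IsParameter φ μ)
    (hψ : IsParameter ψ ν) :
    boxDist mX mY μ ν ≤ boxDistP (fun s t => dist (φ s) (φ t)) (fun s t => dist (ψ s) (ψ t)) := by
  refine csInf_le ⟨0, ?_⟩ ⟨φ, ψ, hφ, hψ, rfl⟩
  rintro _ ⟨_, _, _, _, rfl⟩
  exact boxDistP_nonneg _ _

theorem mul_boxDist_le_boxDist_scaleMetric [StandardBorelSpace X] [StandardBorelSpace Y]
    (mX : MetricSpace X) (mY : MetricSpace Y) (μ : Measure X) (ν : Measure Y)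
    [IsProbabilityMeasure μ] [IsProbabilityMeasure ν] {c : ℝ} (hc : 0 < c) (hc1 : c ≤ 1) :
    c * boxDist mX mY μ ν ≤ boxDist (scaleMetric mX c hc) (scaleMetric mY c hc) μ ν := by
  obtain ⟨φ₀, hφ₀⟩ := exists_isParameter μ
  obtain ⟨ψ₀, hψ₀⟩ := exists_isParameter ν
  refine le_csInf ⟨_, φ₀, ψ₀, hφ₀, hψ₀, rfl⟩ ?_
  rintro _ ⟨φ, ψ, hφ, hψ, rfl⟩
  exact (mul_le_mul_of_nonneg_left (boxDist_le_boxDistP mX mY hφ hψ) hc.le).trans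
    (mul_boxDistP_le hc hc1 _ _)

variable [m : MetricSpace X] [TopologicalSpace.SeparableSpace X] [OpensMeasurableSpace X]
  [StandardBorelSpace X] {μ ν : Measure X} [IsProbabilityMeasure μ]

theorem boxDist_scaleMetric_le_of_isCoupling {π : Measure (X × X)}
    (hπ : IsCoupling π μ ν) {ε : ℝ} (hε : π.real {z | dist z.1 z.2 ≤ ε}ᶜ ≤ ε) {c : ℝ}
    (hc : 0 < c) (hc2 : c ≤ 1 / 2) :
    boxDist (scaleMetric m c hc) (scaleMetric m c hc) μ ν ≤ ε := by
  have := hπ.isProbabilityMeasure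
  obtain ⟨f, hf⟩ := exists_isParameter π
  have hφ : IsParameter (Prod.fst ∘ f) μ := hπ.fst_eq ▸ hf.comp measurable_fst
  have hψ : IsParameter (Prod.snd ∘ f) ν := hπ.snd_eq ▸ hf.comp measurable_snd
  have hD := measurableSet_dist_le (X := X) ε
  refine (boxDist_le_boxDistP _ _ hφ hψ).trans
    (boxDistP_le (measureReal_nonneg.trans hε) (hf.1 hD) ?_ fun s hs t ht => ?_)
  · rw [← Measure.map_apply hf.1 hD, hf.2, ← ofReal_measureReal]
    rw [probReal_compl_eq_one_sub hD] at hε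
    exact ENNReal.ofReal_le_ofReal (by linarith)
  · change |c * dist (f s).1 (f t).1 - c * dist (f s).2 (f t).2| ≤ ε
    rw [← mul_sub, abs_mul, abs_of_pos hc]
    calc c * |dist (f s).1 (f t).1 - dist (f s).2 (f t).2|
        ≤ 1 / 2 * (dist (f s).1 (f s).2 + dist (f t).1 (f t).2) := by
          gcongr
          exact dist_dist_dist_le _ _ _ _
      _ ≤ 1 / 2 * (ε + ε) := by gcongr; exacts [hs, ht]
      _ = ε := by ring

theorem boxDist_scaleMetric_le_prohorovDist [IsProbabilityMeasure ν]
    {c : ℝ} (hc : 0 < c) (hc2 : c ≤ 1 / 2) :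
    boxDist (scaleMetric m c hc) (scaleMetric m c hc) μ ν ≤ prohorovDist μ ν := by
  refine le_csInf ⟨1, one_pos, fun A _ => ?_⟩ ?_
  · rw [ENNReal.ofReal_one]
    exact prob_le_one.trans le_add_self
  rintro ε ⟨hε, h⟩
  have hreal (A : Set X) (hA : MeasurableSet A) :
      ν.real A ≤ μ.real (Metric.thickening ε A) + ε := by
    refine ENNReal.toReal_le_of_le_ofReal (by positivity) ((h A hA).trans_eq ?_)
    rw [ENNReal.ofReal_add measureReal_nonneg hε.le, ofReal_measureReal]
  refine le_of_forall_pos_le_add fun η hη => ?_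
  obtain ⟨π, hπ, hπε⟩ := exists_isCoupling_of_le_thickening
    (by rw [measure_univ, measure_univ]) hreal hη
  exact boxDist_scaleMetric_le_of_isCoupling hπ hπε hc hc2

end BoxDistance

theorem box_halfBox_prohorov_general {X : Type*} [m : MetricSpace X]
    [TopologicalSpace.SeparableSpace X] [MeasurableSpace X] [OpensMeasurableSpace X]
    [StandardBorelSpace X] (μ ν : Measure X) [IsProbabilityMeasure μ] [IsProbabilityMeasure ν]
    {c : ℝ} (hc : 0 < c) (hc2 : c ≤ 1 / 2) :
    c * boxDist m m μ ν ≤ boxDist (scaleMetric m c hc) (scaleMetric m c hc) μ ν ∧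
      boxDist (scaleMetric m c hc) (scaleMetric m c hc) μ ν ≤ prohorovDist μ ν :=
  ⟨mul_boxDist_le_boxDist_scaleMetric m m μ ν hc (by linarith),
    boxDist_scaleMetric_le_prohorovDist hc hc2⟩

/-- for Borel probability measures `μ`, `ν` on a complete separable
metric space `X`,
`(1/2) □((X,μ),(X,ν)) ≤ □((2⁻¹X,μ),(2⁻¹X,ν)) ≤ d_P(μ,ν)`,
where `2⁻¹X` is `X` with its metric halved. -/
theorem box_halfBox_prohorov {X : Type*} [m : MetricSpace X] [CompleteSpace X]
    [TopologicalSpace.SeparableSpace X] [MeasurableSpace X] [BorelSpace X]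
    (μ ν : Measure X) [IsProbabilityMeasure μ] [IsProbabilityMeasure ν] :
    (1 / 2 : ℝ) * boxDist m m μ ν ≤
        boxDist (scaleMetric m (1 / 2) (by norm_num)) (scaleMetric m (1 / 2) (by norm_num)) μ ν ∧
      boxDist (scaleMetric m (1 / 2) (by norm_num)) (scaleMetric m (1 / 2) (by norm_num)) μ ν ≤
        prohorovDist μ ν :=
  box_halfBox_prohorov_general μ ν (by norm_num) le_rfl
end
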